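/- arXiv:2112.02251 — 3 statements merged into one kernel-verified Lean document; each statement's English description precedes it below -/
import Mathlib

section
/- The number of u-parking functions of length m equals the sum over compositions s = (s₁,...,s_{uₘ−m+1}) of m satisfying s₁+...+s_{uᵢ−i+1} ≥ i for all 1 ≤ i ≤ m, of the multinomial coefficient m!/(s₁!···s_{uₘ−m+1}!) times ∏ᵢ (sᵢ+1)^(sᵢ−1). -/
def IsParkingFn {m : ℕ} (u : Fin m → ℕ) (π : Fin m → ℕ) : Prop :=
  (∀ i, 0 < π i) ∧ ∃ σ : Equiv.Perm (Fin m),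
    Monotone (fun i => π (σ i)) ∧ ∀ i, π (σ i) ≤ u i

/- The number of `u`-parking functions of length `m` (with `u` one-indexed: `u 1 < ⋯ < u m`)
equals the sum, over compositions `s = (s₁,...,s_{uₘ-m+1})` of `m` into nonnegative parts
with `s₁ + ⋯ + s_{uᵢ-i+1} ≥ i` for all `1 ≤ i ≤ m`, of the multinomial coefficient
times `∏ᵢ (sᵢ+1)^(sᵢ-1)`. -/

open Finset

def pkT (f : ℕ → ℚ) (S : Finset ℕ) (m : ℕ) : ℚ :=
  ∑ s ∈ S.piAntidiag m, ∏ j ∈ S, f (s j)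

def pkGood (b : ℕ → ℕ) (i : ℕ) (s : ℕ → ℕ) : Prop :=
  ∀ j < i, j + 1 ≤ ∑ l ∈ range (b j), s l

open Classical in
noncomputable def pkR (f : ℕ → ℚ) (b : ℕ → ℕ) (i k : ℕ) : ℚ :=
  ∑ s ∈ ((range k).piAntidiag i).filter (fun s => pkGood b i s),
    ∏ j ∈ range k, f (s j)

open Classical in
theorem pk_exists_unique (b : ℕ → ℕ) (hb : Monotone b) (m k : ℕ) (hk : b m ≤ k) (s : ℕ → ℕ)
    (hs : s ∈ (range k).piAntidiag m) :
    ((range (m+1)).filter (fun i => pkGood b i s ∧ ∑ l ∈ range (b i), s l = i)).card = 1 := by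
  have hS : ∀ {x y}, x ≤ y → ∑ l ∈ range x, s l ≤ ∑ l ∈ range y, s l := fun {x y} h =>
    Finset.sum_le_sum_of_subset (range_subset_range.2 h)
  rw [mem_piAntidiag] at hs
  have h0 : ∑ l ∈ range (b m), s l ≤ m := (hS hk).trans hs.1.le
  have hex : ∃ i, ∑ l ∈ range (b i), s l ≤ i := ⟨m, h0⟩
  have hle : Nat.find hex ≤ m := Nat.find_min' hex h0
  have hspec := Nat.find_spec hex
  have hmin : ∀ j < Nat.find hex, j < ∑ l ∈ range (b j), s l := fun j hj => by
    simpa using Nat.find_min hex hj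
  generalize Nat.find hex = i at *
  rw [card_eq_one]
  refine ⟨i, ?_⟩
  ext i'
  simp only [mem_filter, mem_range, mem_singleton]
  constructor
  · rintro ⟨h1, h2, h3⟩
    rcases lt_trichotomy i' i with h | h | h
    · have := hmin _ h; omega
    · exact h
    · have := h2 _ h; omega
  · rintro rfl
    refine ⟨by omega, fun j hj => hmin j hj, le_antisymm hspec ?_⟩
    rcases i' with _ | j
    · simp
    · exact (hmin j (by omega)).trans_le (hS (hb (by omega)))

open Classical in
theorem pk_decomp (f : ℕ → ℚ) (b : ℕ → ℕ) (hb : Monotone b) (m k : ℕ) (hk : b m ≤ k) :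
    pkT f (range k) m =
      ∑ i ∈ range (m+1), pkR f b i (b i) * pkT f (Ico (b i) k) (m - i) := by
  have h1 : pkT f (range k) m = ∑ s ∈ (range k).piAntidiag m, ∑ i ∈ range (m+1),
      if (pkGood b i s ∧ ∑ l ∈ range (b i), s l = i) then ∏ j ∈ range k, f (s j) else 0 := by
    refine Finset.sum_congr rfl fun s hs => ?_
    rw [← Finset.sum_filter, Finset.sum_const, pk_exists_unique b hb m k hk s hs, one_smul]
  rw [h1, Finset.sum_comm]
  refine Finset.sum_congr rfl fun i hi => ?_
  have him : i ≤ m := by simpa [Nat.lt_succ_iff] using hi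
  have hbi : b i ≤ k := (hb him).trans hk
  rw [← Finset.sum_filter, pkR, pkT, Finset.sum_mul_sum, ← Finset.sum_product']
  have hg : ∀ s t : ℕ → ℕ, (∀ l < b i, s l = t l) → pkGood b i s → pkGood b i t := by
    intro s t hst h j hj
    have e : ∑ l ∈ range (b j), s l = ∑ l ∈ range (b j), t l :=
      Finset.sum_congr rfl fun l hl => hst l ((mem_range.1 hl).trans_le (hb hj.le))
    rw [← e]
    exact h j hj
  refine Finset.sum_nbij' (fun s => (fun l => if l < b i then s l else 0,
      fun l => if l < b i then 0 else s l)) (fun p l => if l < b i then p.1 l else p.2 l)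
      ?_ ?_ ?_ ?_ ?_
  · intro s hs
    simp only [mem_filter, mem_product, mem_piAntidiag, mem_range, mem_Ico] at hs ⊢
    obtain ⟨⟨h2, h3⟩, h4, h5⟩ := hs
    refine ⟨⟨⟨?_, ?_⟩, hg s _ ?_ h4⟩, ?_, ?_⟩
    · refine Eq.trans ?_ h5
      refine Finset.sum_congr rfl fun l hl => ?_
      simp [mem_range.1 hl]
    · intro l; split_ifs <;> simp_all
    · intro l hl; simp [hl]
    · rw [← Finset.sum_range_add_sum_Ico s hbi, h5] at h2
      have : ∑ l ∈ Ico (b i) k, s l = m - i := by omega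
      rw [← this]
      refine Finset.sum_congr rfl fun l hl => ?_
      have := (mem_Ico.1 hl).1
      simp only [if_neg (not_lt.2 this)]
    · intro l
      have := h3 l
      split_ifs with h
      · simp
      · intro h'; exact ⟨by omega, this h'⟩
  · rintro ⟨s, t⟩ hs
    simp only [mem_filter, mem_product, mem_piAntidiag, mem_range, mem_Ico] at hs ⊢
    obtain ⟨⟨⟨h2, h3⟩, h4⟩, h5, h6⟩ := hs
    have e1 : ∑ l ∈ range (b i), (if l < b i then s l else t l) = i := by
      refine Eq.trans ?_ h2
      refine Finset.sum_congr rfl fun l hl => ?_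
      simp [mem_range.1 hl]
    refine ⟨⟨?_, ?_⟩, hg s _ ?_ h4, e1⟩
    · rw [← Finset.sum_range_add_sum_Ico _ hbi, e1]
      have : ∑ l ∈ Ico (b i) k, (if l < b i then s l else t l) = m - i := by
        rw [← h5]
        refine Finset.sum_congr rfl fun l hl => ?_
        have := (mem_Ico.1 hl).1
        simp only [if_neg (not_lt.2 this)]
      omega
    · intro l
      split_ifs with h
      · intro; omega
      · exact fun h' => (h6 l h').2
    · intro l hl; simp [hl]
  · intro s hs
    funext l
    dsimp
    split_ifs <;> rfl
  · rintro ⟨s, t⟩ hs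
    simp only [mem_filter, mem_product, mem_piAntidiag, mem_range, mem_Ico] at hs
    obtain ⟨⟨⟨h2, h3⟩, h4⟩, h5, h6⟩ := hs
    ext l
    · dsimp
      have := h3 l
      split_ifs
      · rfl
      · by_contra h; exact absurd (this (Ne.symm h)) (by assumption)
    · dsimp
      have := h6 l
      split_ifs
      · by_contra h; have := this (Ne.symm h); omega
      · rfl
  · intro s hs
    rw [← Finset.prod_range_mul_prod_Ico _ hbi]
    congr 1
    · refine Finset.prod_congr rfl fun l hl => ?_
      simp [mem_range.1 hl]
    · refine Finset.prod_congr rfl fun l hl => ?_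
      have := (mem_Ico.1 hl).1
      simp only [if_neg (not_lt.2 this)]

theorem pkT_coeff (f : ℕ → ℚ) (S : Finset ℕ) (m : ℕ) :
    pkT f S m = PowerSeries.coeff m ((PowerSeries.mk f) ^ S.card) := by
  rw [← Finset.prod_const, PowerSeries.coeff_prod, pkT]
  refine Finset.sum_bij' (fun s hs => Finsupp.onFinset S s (mem_piAntidiag.1 hs).2)
    (fun s _ => s) ?_ ?_ ?_ ?_ ?_
  · intro s hs
    simp only [mem_piAntidiag] at hs
    rw [mem_finsuppAntidiag]
    refine ⟨hs.1, Finsupp.support_onFinset_subset⟩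
  · intro s hs
    rw [mem_finsuppAntidiag] at hs
    rw [mem_piAntidiag]
    exact ⟨hs.1, fun i hi => hs.2 (Finsupp.mem_support_iff.2 hi)⟩
  · intro s hs; rfl
  · intro s hs; ext; rfl
  · intro s hs; simp

open Polynomial in
noncomputable def pkA : ℕ → ℚ[X]
  | 0 => 1
  | (n+1) => C (1 / ((n+1).factorial : ℚ)) * (X * (X + C ((n:ℚ)+1)) ^ n)

open Polynomial in
theorem pkA_derivative (n : ℕ) : derivative (pkA (n+1)) = (pkA n).comp (X + 1) := by
  rcases n with _ | n
  · simp [pkA]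
  · apply Polynomial.funext
    intro x
    simp only [pkA, derivative_mul, derivative_C, derivative_X, derivative_pow, eval_add, eval_mul,
      eval_C, eval_X, eval_pow, eval_comp, eval_zero, eval_one, derivative_add]
    have h1 : ((n+1).factorial : ℚ) ≠ 0 := by positivity
    rw [Nat.factorial_succ (n+1)]
    push_cast
    have h2 : (n:ℚ)+1+1 ≠ 0 := by positivity
    field_simp
    ring

open Polynomial in
theorem pkA_eval_zero (n : ℕ) : (pkA (n+1)).eval 0 = 0 := by simp [pkA]

open Polynomial in
theorem pkA_abel (n : ℕ) (y : ℚ) :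
    ∑ p ∈ antidiagonal n, pkA p.1 * C ((pkA p.2).eval y) = (pkA n).comp (X + C y) := by
  induction n with
  | zero => simp [pkA]
  | succ n ih =>
    have hd : derivative (∑ p ∈ antidiagonal (n+1), pkA p.1 * C ((pkA p.2).eval y)
        - (pkA (n+1)).comp (X + C y)) = 0 := by
      rw [Finset.Nat.sum_antidiagonal_succ]
      simp only [derivative_sub, derivative_add, derivative_sum, derivative_mul, derivative_C,
        mul_zero, add_zero, pkA_derivative, derivative_comp, derivative_X, one_mul]
      have := congrArg (fun p => p.comp (X + 1)) ih
      simp only [Polynomial.sum_comp, mul_comp, C_comp, comp_assoc] at this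
      rw [this]
      simp [pkA, comp_assoc, add_right_comm]
    have hc := eq_C_of_natDegree_eq_zero (derivative_eq_zero.1 hd)
    have h0 : eval 0 (∑ p ∈ antidiagonal (n+1), pkA p.1 * C ((pkA p.2).eval y)
        - (pkA (n+1)).comp (X + C y)) = 0 := by
      rw [Finset.Nat.sum_antidiagonal_succ]
      simp [eval_finsetSum, pkA_eval_zero, eval_comp]
      simp [pkA]
    rw [hc, eval_C] at h0
    rw [h0, C_0] at hc
    exact sub_eq_zero.1 hc

def pkfP (n : ℕ) : ℚ := ((n:ℚ)+1)^(n-1) / n.factorial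
def pkf1 (n : ℕ) : ℚ := 1 / n.factorial

theorem pkfP_eq (n : ℕ) : pkfP n = (pkA n).eval 1 := by
  rcases n with _ | n
  · simp [pkA, pkfP]
  · simp [pkA, pkfP, div_eq_inv_mul, add_comm]

theorem pkT_P (S : Finset ℕ) (m : ℕ) : pkT pkfP S m = (pkA m).eval (S.card : ℚ) := by
  rw [pkT_coeff]
  generalize S.card = k
  induction k generalizing m with
  | zero =>
    rcases m with _ | m
    · simp [pkA]
    · simp [pkA_eval_zero, PowerSeries.coeff_one]
  | succ k ih =>
    rw [pow_succ, PowerSeries.coeff_mul]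
    simp only [ih, PowerSeries.coeff_mk, pkfP_eq]
    have := congrArg (fun p => p.eval (k:ℚ)) (pkA_abel m 1)
    simpa [Polynomial.eval_finsetSum] using this

theorem pkT_1 (S : Finset ℕ) (m : ℕ) : pkT pkf1 S m = (S.card : ℚ)^m / m.factorial := by
  rw [pkT_coeff]
  have : PowerSeries.mk pkf1 = PowerSeries.exp ℚ := by
    ext n; simp [pkf1, PowerSeries.coeff_exp]
  rw [this, PowerSeries.exp_pow_eq_rescale_exp, PowerSeries.coeff_rescale, PowerSeries.coeff_exp]
  simp [div_eq_mul_inv]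

open Polynomial in
noncomputable def pkE (r : ℕ) : ℚ[X] := C (1 / (r.factorial : ℚ)) * X ^ r

open Polynomial in
theorem pkE_A (r : ℕ) (y : ℚ) :
    (pkE r - derivative (pkE r)).eval (y + r) = (pkA r).eval y := by
  rcases r with _ | r
  · simp [pkE, pkA]
  · simp only [pkE, pkA, derivative_mul, derivative_C, derivative_X_pow, eval_sub, eval_add,
      eval_mul, eval_C, eval_X, eval_pow, eval_zero, eval_natCast, Nat.add_sub_cancel, map_natCast]
    push_cast
    ring

open Polynomial in
theorem pk_poly (a : ℕ → ℕ) (ha : Monotone a) (m : ℕ) :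
    pkE m = ∑ i ∈ range (m+1), C (pkR pkf1 a i (a i)) * (pkE (m-i)).comp (X - C (a i : ℚ)) := by
  apply Polynomial.eq_of_infinite_eval_eq
  refine Set.Infinite.mono ?_ (Set.infinite_range_of_injective
    (f := fun n : ℕ => ((a m + n : ℕ) : ℚ)) (fun x y h => by simpa using h))
  rintro _ ⟨n, rfl⟩
  have h := pk_decomp pkf1 a ha m (a m + n) (by omega)
  simp only [pkT_1, Nat.card_Ico, card_range] at h
  simp only [Set.mem_ofPred_eq, pkE, eval_mul, eval_C, eval_pow, eval_X, eval_finsetSum, eval_comp,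
    eval_sub]
  rw [one_div_mul_eq_div, h]
  refine Finset.sum_congr rfl fun i hi => ?_
  have : a i ≤ a m + n := by
    have := ha (Nat.lt_succ_iff.1 (mem_range.1 hi)); omega
  rw [one_div_mul_eq_div, Nat.cast_sub this]

open Polynomial in
theorem pk_main (a : ℕ → ℕ) (ha : StrictMono a) (m : ℕ) :
    pkR pkf1 a m (a m) = pkR pkfP (fun i => a i - i) m (a m - m) := by
  induction m using Nat.strong_induction_on with
  | _ m ih =>
  have hle : ∀ i, i ≤ a i := fun i => ha.le_apply
  have hb : Monotone (fun i => a i - i) := by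
    refine monotone_nat_of_le_succ fun i => ?_
    have := ha (Nat.lt_succ_self i)
    simp only [Nat.succ_eq_add_one] at this
    omega
  have h1 := pk_decomp pkfP (fun i => a i - i) hb m (a m - m) le_rfl
  simp only [pkT_P, Nat.card_Ico, card_range] at h1
  have h2 := congrArg (fun p => (p - derivative p).eval (((a m - m : ℕ) : ℚ) + m))
    (pk_poly a ha.monotone m)
  simp only [pkE_A] at h2
  rw [derivative_sum, ← Finset.sum_sub_distrib, eval_finsetSum, h1] at h2
  have h3 : ∀ i ∈ range (m+1), eval (((a m - m : ℕ) : ℚ) + m)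
      (C (pkR pkf1 a i (a i)) * (pkE (m-i)).comp (X - C (a i : ℚ)) -
        derivative (C (pkR pkf1 a i (a i)) * (pkE (m-i)).comp (X - C (a i : ℚ)))) =
      pkR pkf1 a i (a i) * (pkA (m-i)).eval ((a m - m - (a i - i) : ℕ) : ℚ) := by
    intro i hi
    have him : i ≤ m := Nat.lt_succ_iff.1 (mem_range.1 hi)
    rw [← pkE_A]
    have e : (((a m - m - (a i - i) : ℕ) : ℚ) + ((m - i : ℕ) : ℚ)) =
        ((a m - m : ℕ) : ℚ) + m - a i := by
      have := hb him
      dsimp at this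
      rw [Nat.cast_sub this, Nat.cast_sub (hle i), Nat.cast_sub him]
      ring
    rw [e]
    simp only [derivative_mul, derivative_C, derivative_comp, derivative_sub, derivative_X,
      eval_sub, eval_add, eval_mul, eval_C, eval_comp, eval_X, eval_zero, eval_one]
    ring
  rw [Finset.sum_congr rfl h3, Finset.sum_range_succ, Finset.sum_range_succ] at h2
  have h4 : ∀ i ∈ range m, pkR pkf1 a i (a i) * (pkA (m-i)).eval ((a m - m - (a i - i) : ℕ) : ℚ) =
      pkR pkfP (fun i => a i - i) i (a i - i) *
        (pkA (m-i)).eval ((a m - m - (a i - i) : ℕ) : ℚ) := by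
    intro i hi
    rw [ih i (mem_range.1 hi)]
  rw [Finset.sum_congr rfl h4] at h2
  have := add_left_cancel h2
  simpa [pkA] using this.symm

def pkGoodFin (b : ℕ → ℕ) (m K : ℕ) (s : Fin K → ℕ) : Prop :=
  ∀ i < m, i + 1 ≤ ∑ j ∈ univ.filter (fun j : Fin K => j.val < b i), s j

theorem pk_sum_fin (K x : ℕ) (hx : x ≤ K) (s : ℕ → ℕ) :
    ∑ j ∈ univ.filter (fun j : Fin K => j.val < x), s j = ∑ l ∈ range x, s l := by
  rw [Finset.sum_filter, Fin.sum_univ_eq_sum_range (fun l => if l < x then s l else 0) K,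
    ← Finset.sum_filter]
  congr 1
  ext l
  simp only [mem_filter, mem_range]
  omega

open Classical in
theorem pkR_fin (w : ℕ → ℕ) (f : ℕ → ℚ) (hf : ∀ n, f n = (w n : ℚ) / n.factorial) (b : ℕ → ℕ)
    (m K : ℕ) (hK : ∀ i < m, b i ≤ K) :
    ((∑ s ∈ (Finset.Nat.antidiagonalTuple K m).filter (fun s => pkGoodFin b m K s),
      Nat.multinomial univ s * ∏ j, w (s j) : ℕ) : ℚ) = m.factorial * pkR f b m K := by
  rw [pkR, Finset.mul_sum, Nat.cast_sum]
  have key : ∀ s : ℕ → ℕ, pkGoodFin b m K (fun j => s j) ↔ pkGood b m s := by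
    intro s
    refine forall₂_congr fun i hi => ?_
    rw [pk_sum_fin K (b i) (hK i hi) s]
  symm
  refine Finset.sum_nbij' (fun s (j : Fin K) => s j)
    (fun s l => if h : l < K then s ⟨l, h⟩ else 0) ?_ ?_ ?_ ?_ ?_
  · intro s hs
    simp only [mem_filter, mem_piAntidiag, Finset.Nat.mem_antidiagonalTuple] at hs ⊢
    refine ⟨?_, (key s).2 hs.2⟩
    rw [Fin.sum_univ_eq_sum_range s K, hs.1.1]
  · intro s hs
    simp only [mem_filter, mem_piAntidiag, Finset.Nat.mem_antidiagonalTuple] at hs ⊢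
    refine ⟨⟨?_, ?_⟩, ?_⟩
    · rw [← hs.1, ← Fin.sum_univ_eq_sum_range]
      simp
    · intro l hl
      by_contra h
      simp only [mem_range] at h
      simp [h] at hl
    · rw [← key]
      simpa using hs.2
  · intro s hs
    simp only [mem_filter, mem_piAntidiag] at hs
    funext l
    by_cases h : l < K
    · simp [h]
    · simp only [h, dite_false]
      by_contra h'
      exact h (mem_range.1 (hs.1.2 l (Ne.symm h')))
  · intro s hs
    simp
  · intro s hs
    simp only [mem_filter, mem_piAntidiag] at hs
    have h1 := Nat.multinomial_spec (univ : Finset (Fin K)) (fun j => s j)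
    rw [Fin.sum_univ_eq_sum_range s K, hs.1.1] at h1
    rw [← h1, ← Fin.prod_univ_eq_prod_range (fun l => f (s l)) K]
    simp only [hf, Finset.prod_div_distrib]
    push_cast
    have : (∏ j : Fin K, ((s j).factorial : ℚ)) ≠ 0 :=
      Finset.prod_ne_zero_iff.2 fun j _ => by positivity
    field_simp

def pkContent {m K : ℕ} (p : Fin m → Fin K) (j : Fin K) : ℕ := (univ.filter (fun i => p i = j)).card

open Classical in
theorem pk_content_card (m K : ℕ) (s : Fin K → ℕ) (hs : ∑ j, s j = m) :
    (univ.filter (fun p : Fin m → Fin K => pkContent p = s)).card = Nat.multinomial univ s := by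
  have h1 := Fintype.sum_pow (fun j : Fin K => (MvPolynomial.X j : MvPolynomial (Fin K) ℕ)) m
  rw [Finset.sum_pow_eq_sum_piAntidiag] at h1
  have hm : ∀ t : Fin K → ℕ, ∏ j, (MvPolynomial.X j : MvPolynomial (Fin K) ℕ) ^ t j =
      MvPolynomial.monomial (Finsupp.equivFunOnFinite.symm t) 1 := by
    intro t
    rw [MvPolynomial.monomial_eq, Finsupp.prod_fintype _ _ (by simp)]
    simp
  have hp : ∀ p : Fin m → Fin K, ∏ i, (MvPolynomial.X (p i) : MvPolynomial (Fin K) ℕ) =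
      MvPolynomial.monomial (Finsupp.equivFunOnFinite.symm (pkContent p)) 1 := by
    intro p
    rw [← hm, ← Finset.prod_fiberwise' univ p (fun j => (MvPolynomial.X j : MvPolynomial (Fin K) ℕ))]
    simp [pkContent]
  simp only [hm, hp] at h1
  have h2 := congrArg (MvPolynomial.coeff (Finsupp.equivFunOnFinite.symm s)) h1
  simp only [MvPolynomial.coeff_sum, MvPolynomial.coeff_monomial,
    EmbeddingLike.apply_eq_iff_eq] at h2
  rw [← Finset.sum_filter, Finset.sum_const] at h2
  simp only [smul_eq_mul, mul_one] at h2
  rw [← h2]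
  rw [Finset.sum_eq_single s]
  · rw [← map_natCast MvPolynomial.C, MvPolynomial.coeff_C_mul]
    simp
  · intro t _ ht
    rw [← map_natCast MvPolynomial.C, MvPolynomial.coeff_C_mul]
    simp [MvPolynomial.coeff_monomial, ht]
  · intro h
    simp [mem_piAntidiag, hs] at h

open Classical in
theorem pk_count (m K : ℕ) (Q : (Fin K → ℕ) → Prop) :
    (univ.filter (fun p : Fin m → Fin K => Q (pkContent p))).card =
      ∑ s ∈ (Finset.Nat.antidiagonalTuple K m).filter (fun s => Q s), Nat.multinomial univ s := by
  rw [Finset.card_eq_sum_card_fiberwise (f := pkContent)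
    (t := (Finset.Nat.antidiagonalTuple K m).filter (fun s => Q s))]
  · refine Finset.sum_congr rfl fun s hs => ?_
    simp only [mem_filter, Finset.Nat.mem_antidiagonalTuple] at hs
    rw [← pk_content_card m K s hs.1, Finset.filter_filter]
    congr 1
    ext p
    simp only [mem_filter, mem_univ, true_and]
    constructor
    · exact fun h => h.2
    · rintro rfl; exact ⟨hs.2, rfl⟩
  · intro p hp
    simp only [coe_filter, mem_univ, true_and, Set.mem_ofPred_eq,
      Finset.Nat.mem_antidiagonalTuple] at hp ⊢
    refine ⟨?_, hp⟩
    have := Finset.card_eq_sum_card_fiberwise (f := p) (s := univ) (t := univ) (by simp)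
    simpa [pkContent] using this.symm

theorem pk_parking_iff {m : ℕ} (u π : Fin m → ℕ) (hu : Monotone u) :
    (∃ σ : Equiv.Perm (Fin m), Monotone (fun i => π (σ i)) ∧ ∀ i, π (σ i) ≤ u i) ↔
      ∀ i, i.val + 1 ≤ (univ.filter (fun j => π j ≤ u i)).card := by
  constructor
  · rintro ⟨σ, -, h⟩ i
    have : (Finset.Iic i).map σ.toEmbedding ⊆ univ.filter (fun j => π j ≤ u i) := by
      intro j hj
      simp only [mem_map, mem_Iic] at hj
      obtain ⟨k, hk, rfl⟩ := hj
      simpa using (h k).trans (hu hk)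
    simpa using Finset.card_le_card this
  · intro h
    refine ⟨Tuple.sort π, Tuple.monotone_sort π, fun i => ?_⟩
    by_contra hlt
    push Not at hlt
    have : univ.filter (fun j => π j ≤ u i) ⊆ (Finset.Iio i).map (Tuple.sort π).toEmbedding := by
      intro j hj
      simp only [mem_filter, mem_univ, true_and] at hj
      simp only [mem_map, mem_Iio]
      refine ⟨(Tuple.sort π).symm j, ?_, by simp⟩
      by_contra hge
      push Not at hge
      have := Tuple.monotone_sort π hge
      simp at this
      omega
    have := (h i).trans (Finset.card_le_card this)
    simp at this

open Classical in
theorem parking_count_compositions (m : ℕ) (hm : 0 < m) (u : ℕ → ℕ)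
    (hmono : StrictMonoOn u (Set.Icc 1 m)) (hpos : ∀ i ∈ Set.Icc 1 m, 0 < u i)
    (hum : m ≤ u m) :
    Set.ncard {π : Fin m → ℕ | IsParkingFn (fun i => u (i.val + 1)) π} =
      ∑ s ∈ (Finset.Nat.antidiagonalTuple (u m - m + 1) m).filter
        (fun s => ∀ i ∈ Finset.Icc 1 m,
          i ≤ ∑ j ∈ Finset.univ.filter
            (fun j : Fin (u m - m + 1) => j.val < u i - i + 1), s j),
        Nat.multinomial Finset.univ s * ∏ j, (s j + 1) ^ (s j - 1) := by
  obtain ⟨a, hadef⟩ : ∃ a : ℕ → ℕ, a = fun i => if i < m then u (i+1) else u m + 1 + (i - m) :=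
    ⟨_, rfl⟩
  have ham : a m = u m + 1 := by simp [hadef]
  have hai : ∀ i < m, a i = u (i+1) := fun i hi => by simp [hadef, hi]
  have ha : StrictMono a := by
    refine strictMono_nat_of_lt_succ fun i => ?_
    rcases lt_trichotomy (i+1) m with h | h | h
    · rw [hai i (by omega), hai (i+1) h]
      exact hmono (by simp; omega) (by simp; omega) (by omega)
    · rw [h, ham, hai i (by omega), h]; omega
    · simp only [hadef]
      rw [if_neg (by omega), if_neg (by omega)]; omega
  have hle : ∀ i, i ≤ a i := fun i => ha.le_apply
  have hb : Monotone (fun i => a i - i) := by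
    refine monotone_nat_of_le_succ fun i => ?_
    have := ha (Nat.lt_succ_self i)
    simp only [Nat.succ_eq_add_one] at this
    omega
  have hmain := pk_main a ha m
  have hbm : a m - m = u m - m + 1 := by omega
  rw [hbm] at hmain
  have h1 := pkR_fin (fun _ => 1) pkf1 (fun n => by simp [pkf1]) a m (a m)
    (fun i hi => (ha hi).le)
  have h2 := pkR_fin (fun n => (n+1)^(n-1)) pkfP (fun n => by simp [pkfP]) (fun i => a i - i) m
    (u m - m + 1) (fun i hi => hbm ▸ hb hi.le)
  rw [← hmain, ← h1] at h2
  have h3 := Nat.cast_injective h2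
  simp only [Finset.prod_const_one, mul_one] at h3
  have hR : ∀ s : Fin (u m - m + 1) → ℕ, (∀ i ∈ Finset.Icc 1 m,
          i ≤ ∑ j ∈ Finset.univ.filter
            (fun j : Fin (u m - m + 1) => j.val < u i - i + 1), s j) ↔
      pkGoodFin (fun i => a i - i) m (u m - m + 1) s := by
    intro s
    have e : ∀ i < m, u (i+1) - (i+1) + 1 = a i - i := by
      intro i hi
      have h1 := hai i hi
      have h2 := hle i
      have h3 : i + 1 ≤ u (i+1) := by
        have h0 : 0 < a 0 := by rw [hai 0 hm]; exact hpos 1 (by simp; omega)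
        have : ∀ j, j + 1 ≤ a j := by
          intro j
          induction j with
          | zero => omega
          | succ j ih => have := ha (Nat.lt_succ_self j); simp only [Nat.succ_eq_add_one] at this; omega
        rw [← h1]; exact this i
      omega
    constructor
    · intro h i hi
      have := h (i+1) (by simp; omega)
      rw [e i hi] at this
      exact this
    · intro h i hi
      rw [mem_Icc] at hi
      obtain ⟨i, rfl⟩ : ∃ k, i = k + 1 := ⟨i - 1, by omega⟩
      rw [e i (by omega)]
      exact h i (by omega)
  simp only [hR]
  rw [h3, ← pk_count m (a m) (pkGoodFin a m (a m)), ← Set.ncard_coe_finset]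
  symm
  have hum' : Monotone (fun i : Fin m => u (i.val+1)) := by
    intro i j hij
    dsimp
    rw [← hai i i.2, ← hai j j.2]
    exact ha.monotone hij
  have hcont : ∀ p : Fin m → Fin (a m), pkGoodFin a m (a m) (pkContent p) ↔
      IsParkingFn (fun i => u (i.val + 1)) (fun i => (p i).val + 1) := by
    intro p
    unfold IsParkingFn
    rw [pk_parking_iff (fun i : Fin m => u (i.val+1)) (fun i => (p i).val + 1) hum']
    have hc : ∀ x, ∑ j ∈ univ.filter (fun j : Fin (a m) => j.val < x), pkContent p j =
        (univ.filter (fun i => (p i).val < x)).card := by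
      intro x
      rw [Finset.card_eq_sum_card_fiberwise (f := p)
        (t := univ.filter (fun j : Fin (a m) => j.val < x)) (by intro i; simp)]
      refine Finset.sum_congr rfl fun j hj => ?_
      rw [pkContent, Finset.filter_filter]
      congr 1
      ext i
      simp only [mem_filter, mem_univ, true_and] at hj ⊢
      constructor
      · rintro rfl; exact ⟨hj, rfl⟩
      · exact fun h => h.2
    unfold pkGoodFin
    simp only [hc]
    constructor
    · intro h
      refine ⟨by simp, fun i => ?_⟩
      have := h i i.2
      rw [hai i i.2] at this
      exact this
    · intro h i hi
      rw [hai i hi]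
      exact h.2 ⟨i, hi⟩
  refine Set.ncard_congr (fun p _ i => (p i).val + 1) ?_ ?_ ?_
  · intro p hp
    simp only [coe_filter, mem_univ, true_and, Set.mem_ofPred_eq] at hp ⊢
    exact (hcont p).1 hp
  · intro p q _ _ h
    funext i
    have := congrFun h i
    exact Fin.ext (by simpa using this)
  · intro π hπ
    have hπ' : IsParkingFn (fun i => u (i.val + 1)) π := hπ
    have hbd : ∀ i, π i - 1 < a m := by
      intro i
      obtain ⟨-, σ, -, h⟩ := hπ'
      have := h (σ.symm i)
      simp only [Equiv.apply_symm_apply] at this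
      rw [← hai _ (σ.symm i).2] at this
      have := ha (σ.symm i).2
      omega
    have e : (fun i => π i - 1 + 1) = π := by
      funext i
      have := hπ'.1 i
      omega
    refine ⟨fun i => ⟨π i - 1, hbd i⟩, ?_, e⟩
    simp only [coe_filter, mem_univ, true_and, Set.mem_ofPred_eq]
    rw [hcont]
    simp only [e]
    exact hπ'
end

section
/- For positive integers a, b, m, l with 1 ≤ l ≤ m, and 0 ≤ k ≤ m−l, the number of (a,b)-parking functions π of length m with π₁ = a+kb, π₂ = a+(k+1)b, ..., π_l = a+(k+l−1)b equals a·∑_{s=0}^{m−l−k} binom(m−l, s)·(a+(m−l−s)b)^(m−s−l−1)·b^s·l·(s+l)^(s−1). -/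
open Finset Polynomial in
lemma ps_altsum (a b : ℝ) (n : ℕ) :
    ∑ t ∈ range (n + 1 + 1), ((n+1).choose t : ℝ) * (-1) ^ (n + 1 - t) * (a + t * b) ^ n = 0 := by
  have hd : ((C a + C b * X : ℝ[X]) ^ n).natDegree < n + 1 := by
    have h1 : (C a + C b * X : ℝ[X]).natDegree ≤ 1 := by compute_degree
    have := natDegree_pow_le_of_le n h1
    omega
  have h := congrFun (Polynomial.fwdDiff_iter_eq_zero_of_degree_lt hd) 0
  rw [fwdDiff_iter_eq_sum_shift] at h
  simp only [Pi.zero_apply] at h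
  rw [← h]
  refine sum_congr rfl fun t _ => ?_
  simp
  ring

/-- The closed formula, with natural exponents. -/
noncomputable def psg (a b : ℝ) : ℕ → ℝ
  | 0 => 1
  | t + 1 => a * (a + (t + 1 : ℕ) * b) ^ t

open Finset Polynomial in
lemma ps_abel_poly (a b : ℝ) (n : ℕ) :
    ∑ t ∈ range (n + 1), C ((n.choose t : ℝ) * psg a b t) * (X - C (a + t * b)) ^ (n - t)
      = (X ^ n : ℝ[X]) := by
  induction n with
  | zero => simp [psg]
  | succ n ih =>
    set F : ℝ[X] := ∑ t ∈ range (n + 1 + 1),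
      C (((n+1).choose t : ℝ) * psg a b t) * (X - C (a + t * b)) ^ (n + 1 - t) with hF
    have hder : derivative (F - X ^ (n+1)) = 0 := by
      rw [derivative_sub, derivative_X_pow, hF, derivative_sum, sum_range_succ]
      simp only [Nat.add_sub_cancel, Nat.cast_add, Nat.cast_one]
      rw [← ih, mul_sum]
      simp only [derivative_C_mul, Nat.sub_self, pow_zero, derivative_one, mul_zero, add_zero]
      rw [sub_eq_zero]
      refine sum_congr rfl fun t ht => ?_
      have ht' : t ≤ n := by simpa [Nat.lt_succ_iff] using ht
      have h1 : n + 1 - t = (n - t) + 1 := by omega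
      rw [h1, derivative_X_sub_C_pow]
      have h2 : ((n+1).choose t : ℝ) * ((n - t : ℕ) + 1 : ℝ) = (n + 1) * n.choose t := by
        have := Nat.choose_mul_succ_eq n t
        rw [h1] at this
        have := congrArg (Nat.cast : ℕ → ℝ) this
        push_cast at this
        linarith
      have h3 := congrArg (C : ℝ → ℝ[X]) h2
      simp only [C_mul, C_add, C_1, map_natCast, Nat.add_sub_cancel, Nat.cast_add, Nat.cast_one] at h3 ⊢
      linear_combination (C (psg a b t) * (X - (C a + (t : ℝ[X]) * C b)) ^ (n - t)) * h3
    have hc := derivative_eq_zero.1 hder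
    have hc2 := eq_C_of_natDegree_eq_zero hc
    have h0 : (F - X ^ (n+1)).coeff 0 = 0 := by
      rw [coeff_zero_eq_eval_zero, hF]
      simp only [eval_sub, eval_finsetSum, eval_mul, eval_C, eval_pow, eval_X]
      rw [zero_pow (by omega), sub_zero]
      refine Eq.trans ?_ ((congrArg (a * ·) (ps_altsum a b n)).trans (mul_zero a))
      simp only [mul_sum]
      refine sum_congr rfl fun t ht => ?_
      have ht' : t ≤ n + 1 := by simpa [Nat.lt_succ_iff] using ht
      rw [zero_sub, neg_pow]
      have key : psg a b t * (a + t * b) ^ (n + 1 - t) = a * (a + t * b) ^ n := by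
        cases t with
        | zero => simp [psg, pow_succ]; ring
        | succ t =>
          simp only [psg]
          rw [mul_assoc, ← pow_add]
          congr 2
          omega
      linear_combination (((n+1).choose t : ℝ) * (-1) ^ (n + 1 - t)) * key
    rw [h0, C_0, sub_eq_zero] at hc2
    exact hc2

open Finset in
lemma ps_abel (a b x : ℝ) (n : ℕ) :
    ∑ t ∈ range (n + 1), (n.choose t : ℝ) * psg a b t * (x - (a + t * b)) ^ (n - t) = x ^ n := by
  have := congrArg (Polynomial.eval x) (ps_abel_poly a b n)
  simpa [Polynomial.eval_finsetSum] using this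

lemma psg_zpow (a b : ℝ) (ha : 0 < a) (t : ℕ) :
    psg a b t = a * (a + t * b) ^ ((t : ℤ) - 1) := by
  cases t with
  | zero => simp [psg, ha.ne']
  | succ t =>
    simp only [psg]
    congr 1
    rw [← zpow_natCast]
    congr 1
    push_cast; ring

open Finset in
def psD {ι : Type} (a b : ℕ) (T : Finset ι) (x : ι → ℕ) : Prop :=
  (∀ j < #T, j + 1 ≤ #{i ∈ T | x i ≤ a + j * b}) ∧ ∀ i ∉ T, a + #T * b < x i

open Finset in
lemma psD_le {ι : Type} {a b : ℕ} {T : Finset ι} {x : ι → ℕ}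
    (h : psD a b T x) {i : ι} (hi : i ∈ T) : x i ≤ a + (#T - 1) * b := by
  have hpos : 0 < #T := card_pos.2 ⟨i, hi⟩
  have h1 := h.1 (#T - 1) (by omega)
  have h2 : #(filter (fun i => x i ≤ a + (#T - 1) * b) T) = #T :=
    le_antisymm (card_filter_le _ _) (by omega)
  exact (card_filter_eq_iff.1 h2) i hi

open Finset in
lemma psD_le' {ι : Type} {a b : ℕ} {T : Finset ι} {x : ι → ℕ}
    (h : psD a b T x) {i : ι} (hi : i ∈ T) : x i ≤ a + #T * b :=
  (psD_le h hi).trans (by gcongr; omega)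

open Finset in
lemma psD_unique {ι : Type} [Fintype ι] {a b : ℕ} {T U : Finset ι} {x : ι → ℕ}
    (hT : psD a b T x) (hU : psD a b U x) : T = U := by
  classical
  have key : ∀ T U : Finset ι, psD a b T x → psD a b U x → #T ≤ #U := by
    intro T U hT hU
    by_contra! hlt
    have h1 := hT.1 #U hlt
    have h2 : filter (fun i => x i ≤ a + #U * b) T ⊆ U := by
      intro i hi
      by_contra hiU
      have := hU.2 i hiU
      have := (mem_filter.1 hi).2
      omega
    have := card_le_card h2
    omega
  have hc := le_antisymm (key T U hT hU) (key U T hU hT)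
  ext i
  constructor
  · intro hi
    by_contra hiU
    have := hU.2 i hiU
    have := psD_le' hT hi
    rw [hc] at this
    omega
  · intro hi
    by_contra hiU
    have := hT.2 i hiU
    have := psD_le' hU hi
    rw [hc] at *
    omega

open Finset in
lemma psD_exists {ι : Type} [Fintype ι] (a b : ℕ) (x : ι → ℕ) : ∃ T, psD a b T x := by
  classical
  have hex : ∃ t, #{i : ι | x i ≤ a + t * b} ≤ t := ⟨Fintype.card ι, card_le_univ _⟩
  obtain ⟨t, ht, hmin⟩ : ∃ t, #{i : ι | x i ≤ a + t * b} ≤ t ∧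
      ∀ j < t, j + 1 ≤ #{i : ι | x i ≤ a + j * b} :=
    ⟨Nat.find hex, Nat.find_spec hex, fun j hj => by
      have := Nat.find_min hex hj; omega⟩
  have hcard : #{i : ι | x i ≤ a + t * b} = t := by
    refine le_antisymm ht ?_
    rcases Nat.eq_zero_or_pos t with h0 | hpos
    · omega
    · have h1 := hmin (t - 1) (by omega)
      have h2 : #{i : ι | x i ≤ a + (t - 1) * b} ≤ #{i : ι | x i ≤ a + t * b} := by
        apply card_le_card
        intro i hi
        simp only [mem_filter, mem_univ, true_and] at hi ⊢
        exact hi.trans (by gcongr; omega)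
      omega
  refine ⟨({i : ι | x i ≤ a + t * b} : Finset ι), ?_, ?_⟩
  · rw [hcard]
    intro j hj
    refine (hmin j hj).trans (card_le_card ?_)
    intro i hi
    simp only [mem_filter, mem_univ, true_and] at hi ⊢
    exact ⟨hi.trans (by gcongr), hi⟩
  · rw [hcard]
    intro i hi
    simpa using hi

open Finset in
lemma ps_ncard_decomp {ι : Type} [Fintype ι] [DecidableEq ι] (a b : ℕ) (A : Set (ι → ℕ))
    (hA : A.Finite) : A.ncard = ∑ T : Finset ι, {x | x ∈ A ∧ psD a b T x}.ncard := by
  classical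
  choose f hf using psD_exists (ι := ι) a b
  rw [Set.ncard_eq_toFinset_card A hA,
    card_eq_sum_card_fiberwise (f := f) (t := univ) (by intro x _; simp)]
  refine sum_congr rfl fun T _ => ?_
  rw [← Set.ncard_coe_finset]
  congr 1
  ext x
  simp only [coe_filter, Set.Finite.mem_toFinset, Set.mem_ofPred_eq]
  constructor
  · rintro ⟨h, rfl⟩; exact ⟨h, hf x⟩
  · rintro ⟨h, h2⟩; exact ⟨h, psD_unique (hf x) h2⟩

open Finset in
def psPF (ι : Type) [Fintype ι] (a b : ℕ) : Set (ι → ℕ) :=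
  {x | (∀ i, 0 < x i) ∧ ∀ j < Fintype.card ι, j + 1 ≤ #{i | x i ≤ a + j * b}}

def psGlue {ι : Type} [DecidableEq ι] (T : Finset ι) (c : ℕ)
    (p : ({i // i ∈ T} → ℕ) × ({i // i ∉ T} → ℕ)) : ι → ℕ :=
  fun i => if h : i ∈ T then p.1 ⟨i, h⟩ else p.2 ⟨i, h⟩ + c

lemma psGlue_inj {ι : Type} [DecidableEq ι] (T : Finset ι) (c : ℕ) :
    Function.Injective (psGlue T c) := by
  rintro ⟨y, z⟩ ⟨y', z'⟩ h
  ext ⟨i, hi⟩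
  · have := congrFun h i
    simpa [psGlue, hi] using this
  · have := congrFun h i
    simpa [psGlue, hi] using this

open Finset in
lemma ps_card_sub {ι : Type} (T : Finset ι) (p : ι → Prop) [DecidablePred p] :
    #{i : {i // i ∈ T} | p i} = #{i ∈ T | p i} := by
  rw [card_filter, card_filter]
  exact Finset.sum_coe_sort T (fun i => if p i then 1 else 0)

open Finset in
lemma ps_piece {ι : Type} [Fintype ι] [DecidableEq ι] (a b : ℕ) (T : Finset ι)
    (A : Set (ι → ℕ)) (B : Set ({i // i ∉ T} → ℕ))
    (hA : ∀ x ∈ A, ∀ i, 0 < x i) (hB : ∀ z ∈ B, ∀ i, 0 < z i)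
    (h : ∀ x, (∀ i, 0 < x i) → psD a b T x →
      (x ∈ A ↔ (fun i : {i // i ∉ T} => x i - (a + #T * b)) ∈ B)) :
    {x | x ∈ A ∧ psD a b T x}.ncard = (psPF {i // i ∈ T} a b).ncard * B.ncard := by
  rw [← Set.ncard_prod, ← Set.ncard_image_of_injective _ (psGlue_inj T (a + #T * b))]
  congr 1
  ext x
  simp only [Set.mem_ofPred_eq, Set.mem_image, Set.mem_prod]
  constructor
  · rintro ⟨hx, hD⟩
    refine ⟨(fun i => x i, fun i => x i - (a + #T * b)), ⟨⟨fun i => hA x hx i, ?_⟩, ?_⟩, ?_⟩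
    · intro j hj
      rw [ps_card_sub T (fun i => x i ≤ a + j * b)]
      exact hD.1 j (by simpa using hj)
    · exact (h x (hA x hx) hD).1 hx
    · ext i
      by_cases hi : i ∈ T
      · simp [psGlue, hi]
      · have := hD.2 i hi
        simp only [psGlue, hi, dite_false]
        omega
  · rintro ⟨⟨y, z⟩, ⟨hy, hz⟩, rfl⟩
    have hD : psD a b T (psGlue T (a + #T * b) (y, z)) := by
      constructor
      · intro j hj
        rw [← ps_card_sub T (fun i => psGlue T (a + #T * b) (y, z) i ≤ a + j * b)]
        have := hy.2 j (by simpa using hj)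
        simpa [psGlue] using this
      · intro i hi
        have := hB z hz ⟨i, hi⟩
        simp only [psGlue, hi, dite_false]
        omega
    refine ⟨(h _ ?_ hD).2 ?_, hD⟩
    · intro i
      by_cases hi : i ∈ T
      · simpa [psGlue, hi] using hy.1 ⟨i, hi⟩
      · have := hB z hz ⟨i, hi⟩
        simp only [psGlue, hi, dite_false]
        omega
    · convert hz using 1
      ext ⟨i, hi⟩
      simp [psGlue, hi]

open Finset in
lemma ps_card_equiv {ι κ : Type} [Fintype ι] [Fintype κ] (e : ι ≃ κ) (p : κ → Prop)
    [DecidablePred p] : #{i : ι | p (e i)} = #{k : κ | p k} := by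
  rw [card_filter, card_filter]
  exact e.sum_comp (fun k => if p k then 1 else 0)

lemma psPF_equiv {ι κ : Type} [Fintype ι] [Fintype κ] (e : ι ≃ κ) (a b : ℕ) :
    (psPF ι a b).ncard = (psPF κ a b).ncard := by
  have hinj : Function.Injective (fun (x : κ → ℕ) (i : ι) => x (e i)) := by
    intro x y h
    ext k
    simpa using congrFun h (e.symm k)
  rw [← Set.ncard_image_of_injective (psPF κ a b) hinj]
  congr 1
  ext x
  simp only [Set.mem_image]
  constructor
  · rintro ⟨h1, h2⟩
    refine ⟨fun k => x (e.symm k), ⟨fun k => h1 _, fun j hj => ?_⟩, by simp⟩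
    have := h2 j (by rwa [Fintype.card_congr e])
    rwa [← ps_card_equiv e.symm] at this
  · rintro ⟨y, ⟨h1, h2⟩, rfl⟩
    refine ⟨fun k => h1 _, fun j hj => ?_⟩
    have := h2 j (by rwa [← Fintype.card_congr e])
    rwa [← ps_card_equiv e] at this

noncomputable def psq (a b n : ℕ) : ℕ := (psPF (Fin n) a b).ncard

lemma psPF_card {ι : Type} [Fintype ι] (a b : ℕ) :
    (psPF ι a b).ncard = psq a b (Fintype.card ι) :=
  psPF_equiv (Fintype.equivFin ι) a b

open Finset in
lemma ps_card_split {ι : Type} [Fintype ι] [DecidableEq ι] (T : Finset ι) (p : ι → Prop)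
    [DecidablePred p] : #{i | p i} = #{i ∈ T | p i} + #{i : {i // i ∉ T} | p i} := by
  rw [← ps_card_sub T p, card_filter, card_filter, card_filter]
  convert (Fintype.sum_subtype_add_sum_subtype (fun i => i ∈ T)
    (fun i => if p i then 1 else 0)).symm

lemma ps_card_compl {ι : Type} [Fintype ι] [DecidableEq ι] (T : Finset ι) :
    Fintype.card {i // i ∉ T} = Fintype.card ι - T.card := by
  simp [Fintype.card_subtype_compl]

lemma ps_finite {ι : Type} [Fintype ι] (A : Set (ι → ℕ)) (N : ℕ) (h : ∀ x ∈ A, ∀ i, x i ≤ N) :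
    A.Finite := by
  classical
  exact (Set.finite_Icc (0 : ι → ℕ) (fun _ => N)).subset fun x hx => ⟨fun i => Nat.zero_le _, h x hx⟩

lemma ps_box {ι : Type} [Fintype ι] (M : ℕ) :
    {z : ι → ℕ | ∀ i, 0 < z i ∧ z i ≤ M}.ncard = M ^ Fintype.card ι := by
  classical
  have : {z : ι → ℕ | ∀ i, 0 < z i ∧ z i ≤ M} =
      ((Fintype.piFinset fun _ : ι => Finset.Icc 1 M : Finset (ι → ℕ)) : Set (ι → ℕ)) := by
    ext z
    simp [Nat.succ_le_iff, Pi.le_def, forall_and]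
  rw [this, Set.ncard_coe_finset]
  simp

open Finset in
lemma psq_rec (a b n : ℕ) :
    (a + n * b) ^ n = ∑ t ∈ range (n + 1), n.choose t * (psq a b t * ((n - t) * b) ^ (n - t)) := by
  have h1 := ps_box (ι := Fin n) (a + n * b)
  rw [Fintype.card_fin] at h1
  rw [← h1, ps_ncard_decomp a b _ (ps_finite _ (a + n * b) fun x hx i => (hx i).2)]
  have h2 : ∀ T : Finset (Fin n),
      {x | x ∈ {z : Fin n → ℕ | ∀ i, 0 < z i ∧ z i ≤ a + n * b} ∧ psD a b T x}.ncard
        = psq a b #T * ((n - #T) * b) ^ (n - #T) := by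
    intro T
    have hT : #T ≤ n := by simpa using card_le_univ T
    rw [ps_piece a b T _ {z | ∀ i, 0 < z i ∧ z i ≤ (n - #T) * b} (fun x hx i => (hx i).1)
      (fun x hx i => (hx i).1), psPF_card, ps_box, ps_card_compl]
    · simp
    · intro x hpos hD
      have e : a + n * b = a + #T * b + (n - #T) * b := by
        rw [add_assoc, ← add_mul]; congr 2; omega
      simp only [Set.mem_ofPred_eq, e]
      constructor
      · intro h i
        have := hD.2 i i.2
        have := (h i).2
        omega
      · intro h i
        refine ⟨hpos i, ?_⟩
        by_cases hi : i ∈ T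
        · have := psD_le' hD hi
          omega
        · have := (h ⟨i, hi⟩).2
          simp only at this
          omega
  rw [sum_congr rfl fun T _ => h2 T]
  have := sum_powerset_apply_card (fun t => psq a b t * ((n - t) * b) ^ (n - t))
    (x := (univ : Finset (Fin n)))
  simpa using this

open Finset in
lemma psq_eq (a b n : ℕ) : (psq a b n : ℝ) = psg a b n := by
  induction n using Nat.strong_induction_on with
  | _ n ih =>
    have h1 := congrArg (Nat.cast : ℕ → ℝ) (psq_rec a b n)
    have h2 := ps_abel a b (a + n * b) n
    push_cast at h1
    rw [h1, sum_range_succ, sum_range_succ] at h2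
    simp only [Nat.choose_self, Nat.sub_self, pow_zero, Nat.cast_one, one_mul, mul_one] at h2
    have h3 : ∑ t ∈ range n, (n.choose t : ℝ) * psg a b t * ((a + n * b : ℝ) - (a + t * b)) ^ (n - t)
      = ∑ t ∈ range n, (n.choose t : ℝ) * (psq a b t * (((n - t : ℕ) : ℝ) * b) ^ (n - t)) := by
      refine sum_congr rfl fun t ht => ?_
      have ht' := mem_range.1 ht
      rw [ih t ht', Nat.cast_sub ht'.le]
      ring
    linarith

/-- Remaining cars' condition. -/
def psJ (a b l k n : ℕ) : Set (Fin n → ℕ) :=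
  {x | (∀ i, 0 < x i) ∧ ∀ j < l + n,
    j + 1 ≤ min l (j + 1 - k) + (Finset.univ.filter fun i => x i ≤ a + j * b).card}

open Finset in
lemma psJ_piece (a b l k n : ℕ) (hb : 0 < b) (hl : 1 ≤ l) (hk : k ≤ n) (T : Finset (Fin n)) :
    {x | x ∈ psJ a b l k n ∧ psD a b T x}.ncard
      = if k ≤ #T then psq a b #T * psq (l * b) b (n - #T) else 0 := by
  have hT : #T ≤ n := by simpa using card_le_univ T
  have hcnt : ∀ x, psD a b T x → ∀ d, #{i | x i ≤ a + (#T + d) * b} = #T +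
      #{i : {i // i ∉ T} | x i - (a + #T * b) ≤ d * b} := by
    intro x hD d
    rw [ps_card_split T]
    congr 1
    · rw [filter_true_of_mem]
      intro i hi
      refine (psD_le' hD hi).trans ?_
      gcongr
      omega
    · congr 1
      ext i
      simp only [mem_filter, mem_univ, true_and]
      have := hD.2 i i.2
      rw [add_mul]
      omega
  have hcnt0 : ∀ x, psD a b T x → #{i | x i ≤ a + #T * b} = #T := by
    intro x hD
    have := hcnt x hD 0
    simp only [add_zero, zero_mul] at this
    rw [this, filter_false_of_mem]
    · simp
    · intro i _
      have := hD.2 i i.2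
      omega
  split_ifs with hkT
  · rw [ps_piece a b T _ (psPF {i // i ∉ T} (l * b) b) (fun x hx i => hx.1 i)
      (fun x hx i => hx.1 i), psPF_card, psPF_card, ps_card_compl]
    · simp
    · intro x hpos hD
      constructor
      · rintro ⟨-, h⟩
        refine ⟨fun i => by have := hD.2 i i.2; simp only; omega, fun j hj => ?_⟩
        rw [ps_card_compl, Fintype.card_fin] at hj
        have h1 := h (#T + (l + j)) (by omega)
        rw [hcnt x hD] at h1
        rw [← add_mul]
        simp only
        omega
      · rintro ⟨-, h⟩
        refine ⟨hpos, fun j hj => ?_⟩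
        rcases lt_or_ge j #T with hjT | hjT
        · have h1 := hD.1 j hjT
          have h2 : #{i ∈ T | x i ≤ a + j * b} ≤ #{i | x i ≤ a + j * b} :=
            card_le_card (filter_subset_filter _ (subset_univ _))
          omega
        · obtain ⟨d, rfl⟩ := Nat.exists_eq_add_of_le hjT
          rw [hcnt x hD]
          rcases lt_or_ge d l with hd | hd
          · omega
          · obtain ⟨j', rfl⟩ := Nat.exists_eq_add_of_le hd
            have h1 := h j' (by rw [ps_card_compl, Fintype.card_fin]; omega)
            rw [← add_mul] at h1
            simp only at h1
            omega
  · have : {x | x ∈ psJ a b l k n ∧ psD a b T x} = ∅ := by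
      ext x
      simp only [Set.mem_ofPred_eq, Set.mem_empty_iff_false, iff_false]
      rintro ⟨⟨-, h⟩, hD⟩
      have := h #T (by omega)
      rw [hcnt0 x hD] at this
      omega
    rw [this, Set.ncard_empty]

open Finset in
lemma psJ_ncard (a b l k n : ℕ) (hb : 0 < b) (hl : 1 ≤ l) (hk : k ≤ n) :
    (psJ a b l k n).ncard
      = ∑ s ∈ range (n - k + 1), n.choose s * (psq a b (n - s) * psq (l * b) b s) := by
  have hfin : (psJ a b l k n).Finite := by
    refine ps_finite _ (a + (l + n - 1) * b) fun x hx i => ?_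
    have h1 := hx.2 (l + n - 1) (by omega)
    have h2 : #{i | x i ≤ a + (l + n - 1) * b} = #(univ : Finset (Fin n)) :=
      le_antisymm (card_filter_le _ _) (by rw [card_univ, Fintype.card_fin]; omega)
    exact (card_filter_eq_iff.1 h2) i (mem_univ i)
  rw [ps_ncard_decomp a b _ hfin, sum_congr rfl fun T _ => psJ_piece a b l k n hb hl hk T]
  have h := sum_powerset_apply_card
    (fun t => if k ≤ t then psq a b t * psq (l * b) b (n - t) else 0)
    (x := (univ : Finset (Fin n)))
  rw [powerset_univ] at h
  rw [h, card_univ, Fintype.card_fin, ← sum_range_reflect]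
  have hsub : range (n - k + 1) ⊆ range (n + 1) := range_subset_range.2 (by omega)
  rw [← sum_subset hsub]
  · refine sum_congr rfl fun s hs => ?_
    have hs' := mem_range.1 hs
    have e : n + 1 - 1 - s = n - s := by omega
    rw [e, if_pos (by omega), Nat.choose_symm (by omega), smul_eq_mul,
      Nat.sub_sub_self (by omega)]
  · intro s hs hs'
    rw [mem_range] at hs hs'
    rw [if_neg (by omega), smul_zero]

open Finset in
lemma ps_isParkingFn_iff {m : ℕ} (a b : ℕ) (π : Fin m → ℕ) :
    IsParkingFn (fun i => a + i.val * b) π ↔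
      (∀ i, 0 < π i) ∧ ∀ j < m, j + 1 ≤ #{i | π i ≤ a + j * b} := by
  unfold IsParkingFn
  refine and_congr_right fun _ => ⟨?_, ?_⟩
  · rintro ⟨σ, hm, hu⟩ j hj
    have h1 : #((Finset.Iic (⟨j, hj⟩ : Fin m)).map σ.toEmbedding) = j + 1 := by simp
    rw [← h1]
    apply card_le_card
    intro i hi
    simp only [mem_map, mem_Iic, Equiv.coe_toEmbedding] at hi
    obtain ⟨i', hi', rfl⟩ := hi
    simp only [mem_filter, mem_univ, true_and]
    exact (hm hi').trans (hu ⟨j, hj⟩)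
  · intro h
    refine ⟨Tuple.sort π, Tuple.monotone_sort π, fun j => ?_⟩
    by_contra! hlt
    have h1 := h j j.2
    rw [← ps_card_equiv (Tuple.sort π)] at h1
    have h2 : #{i | π (Tuple.sort π i) ≤ a + j.val * b} ≤ #(Finset.Iio j) := by
      apply card_le_card
      intro i hi
      simp only [mem_filter, mem_univ, true_and, mem_Iio] at hi ⊢
      by_contra! hji
      have := Tuple.monotone_sort π hji
      simp only [Function.comp_apply] at this
      omega
    rw [Fin.card_Iio] at h2
    omega

open Finset in
lemma ps_card_prefix (a b l k j : ℕ) (hb : 0 < b) :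
    #{i : Fin l | a + (k + i.val) * b ≤ a + j * b} = min l (j + 1 - k) := by
  have h1 : ∀ i : Fin l, a + (k + i.val) * b ≤ a + j * b ↔ i.val < j + 1 - k := by
    intro i
    rw [Nat.add_le_add_iff_left, Nat.mul_le_mul_right_iff hb]
    omega
  simp only [h1]
  rw [card_filter, Fin.sum_univ_eq_sum_range (fun i => if i < j + 1 - k then 1 else 0) l,
    ← card_filter]
  have : (range l).filter (fun i => i < j + 1 - k) = range (min l (j + 1 - k)) := by
    ext i; simp
  rw [this, card_range]

open Finset in
lemma ps_prefix_ncard (a b n l k : ℕ) (ha : 0 < a) (hb : 0 < b) :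
    Set.ncard {π : Fin (l + n) → ℕ | IsParkingFn (fun i => a + i.val * b) π ∧
        ∀ i : Fin (l + n), i.val < l → π i = a + (k + i.val) * b} = (psJ a b l k n).ncard := by
  have hinj : Function.Injective
      (fun x : Fin n → ℕ => Fin.append (fun i : Fin l => a + (k + i.val) * b) x) := by
    intro x y h
    ext i
    have := congrFun h (Fin.natAdd l i)
    simpa using this
  have hcount : ∀ (x : Fin n → ℕ) (j : ℕ),
      #{i | Fin.append (fun i : Fin l => a + (k + i.val) * b) x i ≤ a + j * b}
        = min l (j + 1 - k) + #{i | x i ≤ a + j * b} := by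
    intro x j
    rw [← ps_card_prefix a b l k j hb, card_filter, Fin.sum_univ_add, card_filter, card_filter]
    simp
  rw [← Set.ncard_image_of_injective _ hinj]
  congr 1
  ext π
  simp only [Set.mem_ofPred_eq, Set.mem_image, ps_isParkingFn_iff]
  constructor
  · rintro ⟨⟨h1, h2⟩, h3⟩
    have e : Fin.append (fun i : Fin l => a + (k + i.val) * b)
        (fun i => π (Fin.natAdd l i)) = π := by
      ext i
      refine Fin.addCases (fun i => ?_) (fun i => ?_) i
      · rw [Fin.append_left, h3 _ (by simp)]; simp
      · rw [Fin.append_right]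
    refine ⟨fun i => π (Fin.natAdd l i), ⟨fun i => h1 _, fun j hj => ?_⟩, e⟩
    rw [← hcount, e]
    exact h2 j hj
  · rintro ⟨x, ⟨h1, h2⟩, rfl⟩
    refine ⟨⟨fun i => ?_, fun j hj => ?_⟩, fun i hi => ?_⟩
    · refine Fin.addCases (fun i => ?_) (fun i => ?_) i
      · rw [Fin.append_left]; omega
      · rw [Fin.append_right]; exact h1 i
    · rw [hcount]; exact h2 j hj
    · have : i = Fin.castAdd n ⟨i.val, hi⟩ := by ext; simp
      rw [this, Fin.append_left]; simp

/-- The number of `(a,b)`-parking functions of length `m` whose first `l` coordinates are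
`a+kb, a+(k+1)b, ..., a+(k+l-1)b` equals
`a ∑_{s=0}^{m-l-k} C(m-l,s) (a+(m-l-s)b)^(m-s-l-1) b^s l (s+l)^(s-1)`
(exponents interpreted as integers). -/
theorem count_specified_prefix (a b m l k : ℕ) (ha : 0 < a) (hb : 0 < b)
    (hl : 1 ≤ l) (hlm : l ≤ m) (hk : k ≤ m - l) :
    (Set.ncard {π : Fin m → ℕ | IsParkingFn (fun i => a + i.val * b) π ∧
        ∀ i : Fin m, i.val < l → π i = a + (k + i.val) * b} : ℝ) =
      (a : ℝ) * ∑ s ∈ Finset.range (m - l - k + 1),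
        ((m - l).choose s : ℝ) *
          ((a + (m - l - s) * b : ℕ) : ℝ) ^ ((m : ℤ) - s - l - 1) *
          (b : ℝ) ^ s * (l : ℝ) * ((s + l : ℕ) : ℝ) ^ ((s : ℤ) - 1) := by
  obtain ⟨n, rfl⟩ := Nat.exists_eq_add_of_le hlm
  have hn : l + n - l = n := by omega
  rw [hn] at hk ⊢
  rw [ps_prefix_ncard a b n l k ha hb, psJ_ncard a b l k n hb hl hk, Finset.mul_sum]
  push_cast
  refine Finset.sum_congr rfl fun s hs => ?_
  have hs' : s ≤ n := by have := Finset.mem_range.1 hs; omega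
  have haR : (0 : ℝ) < a := by exact_mod_cast ha
  have hbR : (0 : ℝ) < b := by exact_mod_cast hb
  have hlR : (0 : ℝ) < l := by exact_mod_cast hl
  rw [psq_eq, psq_eq, psg_zpow _ _ haR, psg_zpow _ _ (by push_cast; positivity)]
  have e1 : ((n - s : ℕ) : ℤ) - 1 = ((l : ℤ) + n) - s - l - 1 := by
    rw [Nat.cast_sub hs']; ring
  have e2 : ((l * b : ℕ) : ℝ) * (((l * b : ℕ) : ℝ) + s * b) ^ ((s : ℤ) - 1)
      = (b : ℝ) ^ s * (l : ℝ) * ((s : ℝ) + l) ^ ((s : ℤ) - 1) := by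
    have : ((l * b : ℕ) : ℝ) + s * b = b * (s + l) := by push_cast; ring
    rw [this, mul_zpow, zpow_sub_one₀ hbR.ne', zpow_natCast]
    push_cast
    field_simp
  rw [e1, e2]
  ring
end

section
/- The Borel distribution with parameter μ ∈ [0,1] is a probability distribution: ∑_{j=1}^∞ e^(−μj)(μj)^(j−1)/j! = 1 for 0 < μ ≤ 1. -/
/-- Coefficients of the (shifted) tree function. -/
noncomputable def bA (j : ℕ) : ℝ := ((j : ℝ) + 1) ^ j / ((j + 1).factorial : ℝ)

/-- Terms of the Borel distribution. -/
noncomputable def bT (μ : ℝ) (j : ℕ) : ℝ :=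
  Real.exp (-(μ * (j + 1))) * (μ * (j + 1)) ^ j / ((j + 1).factorial : ℝ)

lemma bA_nonneg (j : ℕ) : 0 ≤ bA j := by unfold bA; positivity

lemma bA_le (j : ℕ) : bA j ≤ Real.exp 1 * Real.exp 1 ^ j := by
  have h := Real.pow_div_factorial_le_exp ((j : ℝ) + 1) (by positivity) (j + 1)
  have h2 : Real.exp ((j : ℝ) + 1) = Real.exp 1 * Real.exp 1 ^ j := by
    rw [Real.exp_add, ← Real.exp_nat_mul, mul_one, mul_comm]
  rw [← h2]
  refine le_trans ?_ h
  unfold bA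
  gcongr
  · linarith [(Nat.cast_nonneg j : (0 : ℝ) ≤ j)]
  · omega

lemma bT_eq (μ : ℝ) (j : ℕ) :
    bT μ j = Real.exp (-μ) * (bA j * (μ * Real.exp (-μ)) ^ j) := by
  unfold bT bA
  have : Real.exp (-(μ * (j + 1))) = Real.exp (-μ) * Real.exp (-μ) ^ j := by
    rw [← Real.exp_nat_mul, ← Real.exp_add]; congr 1; ring
  rw [this, mul_pow, mul_pow]; ring

lemma fd_zero (n : ℕ) (hn : n ≠ 0) :
    ∑ k ∈ Finset.range (n + 1), bA k * ((-((k : ℝ) + 1)) ^ (n - k) / ((n - k).factorial : ℝ)) = 0 := by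
  have h := fwdDiff_iter_eq_sum_shift (1 : ℝ) (fun x : ℝ => x ^ n) (n + 1) 0
  have h' := fwdDiff_iter_pow_eq_zero_of_lt (R := ℝ) (Nat.lt_succ_self n)
  rw [h', Finset.sum_range_succ'] at h
  simp only [Pi.zero_apply, zero_add, nsmul_eq_mul, mul_one, zsmul_eq_mul, Nat.cast_zero, zero_pow hn,
    mul_zero, add_zero] at h
  have hf : ((n + 1).factorial : ℝ) ≠ 0 := by positivity
  apply mul_left_cancel₀ hf
  rw [mul_zero, Finset.mul_sum]
  refine Eq.trans (Finset.sum_congr rfl fun k hk => ?_) h.symm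
  have hk' : k ≤ n := by simpa [Nat.lt_succ_iff] using hk
  have e1 : ((n + 1).choose (k + 1) : ℝ) = (n + 1).factorial / ((k + 1).factorial * (n - k).factorial) := by
    rw [Nat.cast_choose ℝ (by omega : k + 1 ≤ n + 1)]
    simp
  push_cast
  rw [e1, neg_pow, bA]
  have e2 : ((k : ℝ) + 1) ^ n = (k + 1) ^ k * (k + 1) ^ (n - k) := by
    rw [← pow_add]; congr 1; omega
  rw [e2]
  field_simp

lemma hasSum_real_exp (x : ℝ) : HasSum (fun n : ℕ => x ^ n / (n.factorial : ℝ)) (Real.exp x) := by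
  rw [Real.exp_eq_exp_ℝ]; exact NormedSpace.expSeries_div_hasSum_exp x

lemma small_case (μ : ℝ) (h0 : 0 < μ) (h1 : μ < 1 / 8) : ∑' j, bT μ j = 1 := by
  set F : ℕ × ℕ → ℝ := fun p =>
    bA p.1 * μ ^ p.1 * ((-(((p.1 : ℝ) + 1) * μ)) ^ p.2 / (p.2.factorial : ℝ)) with hF
  have hnorm : ∀ p, ‖F p‖ = bA p.1 * μ ^ p.1 * ((((p.1 : ℝ) + 1) * μ) ^ p.2 / (p.2.factorial : ℝ)) := by
    intro p
    have : |(p.1 : ℝ) + 1| = (p.1 : ℝ) + 1 := abs_of_nonneg (by positivity)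
    simp only [hF, norm_mul, norm_div, norm_pow, norm_neg, Real.norm_eq_abs, this, Nat.abs_cast,
      abs_of_nonneg (bA_nonneg p.1), abs_of_pos h0]
  have hsum : Summable F := by
    apply Summable.of_norm
    rw [summable_prod_of_nonneg (fun p => norm_nonneg _)]
    have hx : ∀ j : ℕ, HasSum (fun k => ‖F (j, k)‖)
        (bA j * μ ^ j * Real.exp (((j : ℝ) + 1) * μ)) := by
      intro j
      simp only [hnorm]
      exact (hasSum_real_exp _).mul_left _
    refine ⟨fun j => (hx j).summable, ?_⟩
    simp only [(hx _).tsum_eq]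
    have hq : Real.exp 1 * μ * Real.exp μ < 1 := by
      have a1 := Real.exp_one_lt_d9
      have a2 : Real.exp μ ≤ Real.exp 1 := Real.exp_le_exp.2 (by linarith)
      have a3 : Real.exp 1 * μ * Real.exp μ ≤ Real.exp 1 * μ * Real.exp 1 := by gcongr
      have a4 := Real.exp_pos 1
      nlinarith [mul_pos a4 a4]
    refine Summable.of_nonneg_of_le (fun j => ?_) (fun j => ?_)
      ((summable_geometric_of_lt_one (by positivity) hq).mul_left (Real.exp 1 * Real.exp μ))
    · have := bA_nonneg j; positivity
    · have e : Real.exp (((j : ℝ) + 1) * μ) = Real.exp μ * Real.exp μ ^ j := by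
        rw [← Real.exp_nat_mul, ← Real.exp_add]; congr 1; ring
      rw [e]
      calc _ ≤ (Real.exp 1 * Real.exp 1 ^ j) * μ ^ j * (Real.exp μ * Real.exp μ ^ j) := by
            gcongr; exact bA_le j
        _ = _ := by rw [mul_pow, mul_pow]; ring
  have hS := hsum.hasSum
  have A : HasSum (bT μ) (∑' p, F p) := by
    refine hS.prod_fiberwise (fun j => ?_)
    have := (hasSum_real_exp (-(((j : ℝ) + 1) * μ))).mul_left (bA j * μ ^ j)
    have e : bT μ j = bA j * μ ^ j * Real.exp (-(((j : ℝ) + 1) * μ)) := by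
      unfold bT bA
      rw [mul_pow, mul_comm μ ((j : ℝ) + 1)]; ring
    rw [e]
    exact this
  have B : HasSum (fun n : ℕ => if n = 0 then (1 : ℝ) else 0) (∑' p, F p) := by
    refine (Finset.HasAntidiagonal.sigmaAntidiagonalEquivProd.hasSum_iff.2 hS).sigma (fun n => ?_)
    convert hasSum_fintype _ using 1
    simp only [Function.comp_apply, Finset.HasAntidiagonal.sigmaAntidiagonalEquivProd_apply]
    rw [Finset.univ_eq_attach, Finset.sum_attach (Finset.HasAntidiagonal.antidiagonal n) F,
      Finset.Nat.sum_antidiagonal_eq_sum_range_succ_mk]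
    split_ifs with hn
    · subst hn; simp [hF, bA]
    · have := fd_zero n hn
      rw [← mul_zero (μ ^ n), ← this, Finset.mul_sum]
      refine Finset.sum_congr rfl fun k hk => ?_
      have hk' : k ≤ n := by simpa [Nat.lt_succ_iff] using hk
      have e2 : μ ^ n = μ ^ k * μ ^ (n - k) := by
        rw [← pow_add]; congr 1; omega
      simp only [hF]
      rw [e2, ← neg_mul, mul_pow]; ring
  rw [A.tsum_eq, ← B.tsum_eq, tsum_ite_eq]

lemma arg_lt {μ : ℝ} (h1 : μ < 1) : μ * Real.exp (-μ) < Real.exp (-1) := by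
  have := Real.add_one_lt_exp (x := μ - 1) (by linarith)
  have e : Real.exp (-1) = Real.exp (μ - 1) * Real.exp (-μ) := by
    rw [← Real.exp_add]; congr 1; ring
  rw [e]
  have := Real.exp_pos (-μ)
  gcongr; linarith

lemma analytic_g {x : ℝ} (h0 : 0 ≤ x) (hx : x < Real.exp (-1)) :
    AnalyticAt ℝ (fun x : ℝ => ∑' n, bA n * x ^ n) x := by
  set p := FormalMultilinearSeries.ofScalars ℝ bA with hp
  set r : NNReal := ⟨Real.exp (-1), (Real.exp_pos _).le⟩ with hr
  have hrad : (r : ENNReal) ≤ p.radius := by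
    refine p.le_radius_of_bound (Real.exp 1) (fun n => ?_)
    rw [hp, FormalMultilinearSeries.ofScalars_norm, Real.norm_of_nonneg (bA_nonneg n)]
    have : (r : ℝ) = Real.exp (-1) := rfl
    rw [this]
    calc _ ≤ Real.exp 1 * Real.exp 1 ^ n * Real.exp (-1) ^ n := by gcongr; exact bA_le n
      _ = Real.exp 1 := by rw [mul_assoc, ← mul_pow, ← Real.exp_add]; simp
  have hxr : x ∈ Metric.eball (0 : ℝ) p.radius := by
    refine Metric.eball_subset_eball hrad ?_
    rw [Metric.eball_coe]
    simp only [Metric.mem_ball, dist_zero_right, Real.norm_of_nonneg h0]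
    exact hx
  have hpos : 0 < p.radius := lt_of_lt_of_le (by
    rw [ENNReal.coe_pos]; exact Real.exp_pos _) hrad
  have := (p.hasFPowerSeriesOnBall hpos).analyticAt_of_mem hxr
  have e : p.sum = fun x : ℝ => ∑' n, bA n * x ^ n := by
    have := FormalMultilinearSeries.ofScalarsSum_eq_tsum (E := ℝ) bA
    simp only [smul_eq_mul] at this
    exact this
  rwa [e] at this

lemma summable_bT {μ : ℝ} (h0 : 0 < μ) (h1 : μ < 1) : Summable (bT μ) := by
  have hq : Real.exp 1 * (μ * Real.exp (-μ)) < 1 := by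
    calc _ < Real.exp 1 * Real.exp (-1) := by
            have := Real.exp_pos 1
            gcongr; exact arg_lt h1
      _ = 1 := by rw [← Real.exp_add]; simp
  refine Summable.of_nonneg_of_le (fun j => ?_) (fun j => ?_)
      ((summable_geometric_of_lt_one (by positivity) hq).mul_left (Real.exp (-μ) * Real.exp 1))
  · unfold bT; positivity
  · rw [bT_eq]
    calc _ ≤ Real.exp (-μ) * (Real.exp 1 * Real.exp 1 ^ j * (μ * Real.exp (-μ)) ^ j) := by
          gcongr; exact bA_le j
      _ = _ := by rw [mul_pow (Real.exp 1)]; ring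

lemma lt_one_case {μ : ℝ} (h0 : 0 < μ) (h1 : μ < 1) : ∑' j, bT μ j = 1 := by
  have han : AnalyticOnNhd ℝ (fun μ : ℝ => ∑' j, bT μ j) (Set.Ioo 0 1) := by
    intro x hx
    have e : (fun μ : ℝ => ∑' j, bT μ j) = fun μ : ℝ => Real.exp (-μ) *
        (fun x : ℝ => ∑' n, bA n * x ^ n) (μ * Real.exp (-μ)) := by
      funext μ
      simp only [bT_eq, tsum_mul_left]
    rw [e]
    have hin : AnalyticAt ℝ (fun μ : ℝ => Real.exp (-μ)) x := by fun_prop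
    have hin2 : AnalyticAt ℝ (fun μ : ℝ => μ * Real.exp (-μ)) x := by fun_prop
    have hg := analytic_g (mul_nonneg hx.1.le (Real.exp_pos (-x)).le) (arg_lt hx.2)
    exact hin.mul (AnalyticAt.fun_comp (f := fun μ : ℝ => μ * Real.exp (-μ)) hg hin2)
  have hone : AnalyticOnNhd ℝ (fun _ : ℝ => (1 : ℝ)) (Set.Ioo 0 1) := fun x _ => analyticAt_const
  refine han.eqOn_of_preconnected_of_eventuallyEq hone isPreconnected_Ioo
    (z₀ := 1 / 16) (by norm_num) ?_ ⟨h0, h1⟩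
  filter_upwards [Ioo_mem_nhds (show (0 : ℝ) < 1 / 16 by norm_num)
    (show (1 / 16 : ℝ) < 1 / 8 by norm_num)] with x hx
  exact small_case x hx.1 hx.2

lemma one_case : ∑' j, bT 1 j = 1 := by
  have hev : ∀ᶠ x in nhdsWithin (1 : ℝ) (Set.Iio 1), 0 < x ∧ x < 1 :=
    Ioo_mem_nhdsLT (show (0 : ℝ) < 1 by norm_num)
  have hnn : ∀ j, 0 ≤ bT 1 j := fun j => by unfold bT; positivity
  have hle : ∀ n, ∑ i ∈ Finset.range n, bT 1 i ≤ 1 := by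
    intro n
    have hc : Continuous (fun x => ∑ i ∈ Finset.range n, bT x i) := by
      unfold bT; fun_prop
    refine le_of_tendsto ((hc.tendsto 1).mono_left (nhdsWithin_le_nhds (s := Set.Iio 1))) ?_
    filter_upwards [hev] with x hx
    rw [← lt_one_case hx.1 hx.2]
    refine (summable_bT hx.1 hx.2).sum_le_tsum _ (fun j _ => ?_)
    have := hx.1
    unfold bT; positivity
  have hs := summable_of_sum_range_le hnn hle
  refine le_antisymm (Real.tsum_le_of_sum_range_le hnn hle) ?_
  refine le_of_tendsto ((continuous_id.tendsto (1 : ℝ)).mono_left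
    (nhdsWithin_le_nhds (s := Set.Iio 1))) ?_
  filter_upwards [hev] with x hx
  have hx0 := hx.1
  calc x = ∑' j, x * bT x j := by rw [tsum_mul_left, lt_one_case hx.1 hx.2, mul_one]
    _ ≤ _ := by
      refine ((summable_bT hx.1 hx.2).mul_left x).tsum_le_tsum (fun j => ?_) hs
      rw [bT_eq, bT_eq]
      have h := bA_nonneg j
      calc _ = bA j * (x * Real.exp (-x)) ^ (j + 1) := by ring
        _ ≤ bA j * Real.exp (-1) ^ (j + 1) := by
          gcongr; exact (arg_lt hx.2).le
        _ = _ := by ring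

/-- The Borel distribution with parameter `0 < μ ≤ 1` is a probability distribution:
`∑_{j=1}^∞ e^{-μj}(μj)^{j-1}/j! = 1`. -/
theorem borel_sums_to_one (μ : ℝ) (h0 : 0 < μ) (h1 : μ ≤ 1) :
    ∑' j : ℕ, Real.exp (-(μ * (j + 1))) * (μ * (j + 1)) ^ j / ((j + 1).factorial : ℝ) = 1 := by
  rcases h1.lt_or_eq with h | h
  · exact lt_one_case h0 h
  · subst h; exact one_case
end
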